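/- Suppose in addition that (𝔹, ‖·‖) is a real separable Hilbert space, with the norm induced by the inner product. Then for every n ≥ 1, almost surely E[‖S_n − S_{n−1}‖² | F_{n−1}] ≤ 2^{p−1}·λ_n^p·(v + ‖μ − Ẑ_n‖^p). -/

import Mathlib

open MeasureTheory
open scoped Classical

/-- `truncB x = min(1, ‖x‖)/‖x‖` for `x ≠ 0`, and `truncB 0 = 1`; so `truncB x • x` is the
projection of `x` onto the closed unit ball. -/
noncomputable def truncB {B : Type*} [NormedAddCommGroup B] (x : B) : ℝ :=
  if x = 0 then 1 else min 1 ‖x‖ / ‖x‖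

/-- `K_p = (1/p) ((p-1)/p)^{p-1}`. -/
noncomputable def Kp (p : ℝ) : ℝ := (1 / p) * ((p - 1) / p) ^ (p - 1)

/-- `𝔠_p(ρ) = 2^{p+1} (e^{2ρ} - 2ρ - 1)/(2ρ)²`. -/
noncomputable def frakC (p ρ : ℝ) : ℝ :=
  2 ^ (p + 1) * (Real.exp (2 * ρ) - 2 * ρ - 1) / (2 * ρ) ^ 2

/-!
The centred increment is `λ • (T - E[T | m])`, where `T = truncB (λ • Y) • Y` and `Y = X - Z`. In a
Hilbert space its conditional second moment is at most that of `λ • T`, the projection of `λ • Y`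
onto the unit ball, whose norm is `min 1 ‖λ • Y‖`. As `p ≤ 2`, its square is at most
`λ ^ p * ‖Y‖ ^ p`, and convexity of `t ↦ t ^ p` splits `‖X - Z‖ ^ p` at `μ`. The predictable weight
`λ ^ p` need not be integrable, so it is taken out of the conditional expectation only after
damping both sides by an `m`-measurable factor.
-/

section Truncation

variable {E : Type*} [NormedAddCommGroup E]

theorem truncB_eq_inv_max (x : E) : truncB x = (max 1 ‖x‖)⁻¹ := by
  obtain rfl | hx := eq_or_ne x 0
  · simp [truncB]
  rw [truncB, if_neg hx]
  have hx_pos : 0 < ‖x‖ := norm_pos_iff.mpr hx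
  obtain h | h := le_total 1 ‖x‖
  · rw [min_eq_left h, max_eq_right h, one_div]
  · rw [min_eq_right h, max_eq_left h, div_self hx_pos.ne', inv_one]

theorem continuous_truncB : Continuous (truncB : E → ℝ) := by
  have h_pos (x : E) : 0 < max 1 ‖x‖ := one_pos.trans_le (le_max_left _ _)
  rw [funext truncB_eq_inv_max]
  exact (continuous_const.max continuous_norm).inv₀ fun x => (h_pos x).ne'

variable [NormedSpace ℝ E]

theorem norm_truncB_smul_self (x : E) : ‖truncB x • x‖ = min 1 ‖x‖ := by
  have h_pos : 0 < max 1 ‖x‖ := one_pos.trans_le (le_max_left _ _)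
  rw [norm_smul, truncB_eq_inv_max, norm_inv, Real.norm_of_nonneg h_pos.le,
    inv_mul_eq_iff_eq_mul₀ h_pos.ne', max_mul_min, one_mul]

theorem norm_truncB_smul_self_sq_le_rpow (x : E) {p : ℝ} (hp0 : 0 ≤ p) (hp2 : p ≤ 2) :
    ‖truncB x • x‖ ^ 2 ≤ ‖x‖ ^ p := by
  have h_nonneg : 0 ≤ min 1 ‖x‖ := le_min zero_le_one (norm_nonneg x)
  calc ‖truncB x • x‖ ^ 2 = min 1 ‖x‖ ^ (2 : ℝ) := by rw [norm_truncB_smul_self, Real.rpow_two]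
    _ ≤ min 1 ‖x‖ ^ p :=
      Real.rpow_le_rpow_of_exponent_ge' h_nonneg (min_le_left _ _) hp0 hp2
    _ ≤ ‖x‖ ^ p := Real.rpow_le_rpow h_nonneg (min_le_right _ _) hp0

end Truncation

theorem norm_sub_rpow_le_two_rpow_mul {E : Type*} [SeminormedAddCommGroup E] (x y z : E) {p : ℝ}
    (hp : 1 ≤ p) : ‖x - z‖ ^ p ≤ 2 ^ (p - 1) * (‖x - y‖ ^ p + ‖y - z‖ ^ p) := by
  calc ‖x - z‖ ^ p ≤ (‖x - y‖ + ‖y - z‖) ^ p :=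
        Real.rpow_le_rpow (norm_nonneg _) (norm_sub_le_norm_sub_add_norm_sub x y z)
          (zero_le_one.trans hp)
    _ ≤ 2 ^ (p - 1) * (‖x - y‖ ^ p + ‖y - z‖ ^ p) := by
        exact_mod_cast NNReal.rpow_add_le_mul_rpow_add_rpow ‖x - y‖₊ ‖y - z‖₊ hp

theorem integrable_norm_sub_rpow {Ω E : Type*} [NormedAddCommGroup E] {mΩ : MeasurableSpace Ω}
    {P : Measure Ω} {f g : Ω → E} {p : ℝ} (hp : 0 < p)
    (hf : AEStronglyMeasurable f P) (hg : AEStronglyMeasurable g P)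
    (hfp : Integrable (fun ω => ‖f ω‖ ^ p) P) (hgp : Integrable (fun ω => ‖g ω‖ ^ p) P) :
    Integrable (fun ω => ‖f ω - g ω‖ ^ p) P := by
  have integrable_iff_memLp {h : Ω → E} (hh : AEStronglyMeasurable h P) :
      Integrable (fun ω => ‖h ω‖ ^ p) P ↔ MemLp h (ENNReal.ofReal p) P := by
    rw [← integrable_norm_rpow_iff hh (ENNReal.ofReal_pos.mpr hp).ne' ENNReal.ofReal_ne_top,
      ENNReal.toReal_ofReal hp.le]
  exact (integrable_iff_memLp (hf.sub hg)).mpr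
    (((integrable_iff_memLp hf).mp hfp).sub ((integrable_iff_memLp hg).mp hgp))

section CondExp

variable {Ω : Type*} {m mΩ : MeasurableSpace Ω} {P : Measure Ω}

theorem condExp_ae_le_of_ae_le_stronglyMeasurable (hm : m ≤ mΩ) [SigmaFinite (P.trim hm)]
    {f k : Ω → ℝ} (hf : Integrable f P) (hk : StronglyMeasurable[m] k) (hfk : f ≤ᵐ[P] k) :
    P[f | m] ≤ᵐ[P] k := by
  set s : Set Ω := {ω | k ω < (P[f | m]) ω}
  have hs : MeasurableSet[m] s := hk.measurableSet_lt stronglyMeasurable_condExp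
  have hks : StronglyMeasurable[m] (s.indicator k) := hk.indicator hs
  -- On `s`, `k` lies between the integrable functions `f` and `P[f | m]`.
  have hks_int : Integrable (s.indicator k) P := by
    have h_dom : Integrable (fun ω => |f ω| + |(P[f | m]) ω|) P := hf.abs.add integrable_condExp.abs
    refine h_dom.mono' (hks.mono hm).aestronglyMeasurable ?_
    filter_upwards [hfk] with ω hω
    by_cases hωs : ω ∈ s
    · have hlt : k ω < (P[f | m]) ω := hωs
      rw [Set.indicator_of_mem hωs]
      exact (abs_le_max_abs_abs hω hlt.le).trans
        (max_le_add_of_nonneg (abs_nonneg _) (abs_nonneg _))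
    · rw [Set.indicator_of_notMem hωs, norm_zero]
      exact add_nonneg (abs_nonneg _) (abs_nonneg _)
  have h_mono : P[s.indicator f | m] ≤ᵐ[P] P[s.indicator k | m] :=
    condExp_mono (hf.indicator (hm s hs)) hks_int
      (hfk.mono fun ω hω => Set.indicator_le_indicator hω)
  rw [condExp_of_stronglyMeasurable hm hks hks_int] at h_mono
  filter_upwards [h_mono, condExp_indicator hf hs] with ω hω h_ind
  by_contra! hlt
  have hωs : ω ∈ s := hlt
  rw [h_ind, Set.indicator_of_mem hωs, Set.indicator_of_mem hωs] at hω
  exact hω.not_gt hlt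

theorem condExp_ae_le_mul_condExp_add (hm : m ≤ mΩ) [SigmaFinite (P.trim hm)]
    {f g h k : Ω → ℝ} (hf : Integrable f P) (hh : Integrable h P) (hg : StronglyMeasurable[m] g)
    (hk : StronglyMeasurable[m] k) (hle : ∀ᵐ ω ∂P, f ω ≤ g ω * h ω + k ω) :
    ∀ᵐ ω ∂P, (P[f | m]) ω ≤ g ω * (P[h | m]) ω + k ω := by
  set c : Ω → ℝ := fun ω => (1 + |g ω|)⁻¹
  have hc_pos (ω : Ω) : 0 < c ω := inv_pos.mpr (by positivity)
  have hc : StronglyMeasurable[m] c :=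
    (measurable_const.add hg.norm.measurable).inv.stronglyMeasurable
  have hcg : StronglyMeasurable[m] (c * g) := hc.mul hg
  have hc_le (ω : Ω) : ‖c ω‖ ≤ 1 := by
    rw [Real.norm_of_nonneg (hc_pos ω).le]
    exact inv_le_one_of_one_le₀ (by linarith [abs_nonneg (g ω)])
  have hcg_le (ω : Ω) : ‖(c * g) ω‖ ≤ 1 := by
    rw [Pi.mul_apply, norm_mul, Real.norm_of_nonneg (hc_pos ω).le, Real.norm_eq_abs,
      inv_mul_le_iff₀ (by positivity)]
    linarith
  have hcf_int : Integrable (c * f) P :=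
    hf.bdd_mul (hc.mono hm).aestronglyMeasurable (ae_of_all _ hc_le)
  have hcgh_int : Integrable (c * g * h) P :=
    hh.bdd_mul (hcg.mono hm).aestronglyMeasurable (ae_of_all _ hcg_le)
  have h_damped : P[c * f - c * g * h | m] ≤ᵐ[P] c * k := by
    refine condExp_ae_le_of_ae_le_stronglyMeasurable hm (hcf_int.sub hcgh_int) (hc.mul hk) ?_
    filter_upwards [hle] with ω hω
    simp only [Pi.sub_apply, Pi.mul_apply]
    linarith [mul_le_mul_of_nonneg_left hω (hc_pos ω).le]
  filter_upwards [h_damped, condExp_sub hcf_int hcgh_int m,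
    condExp_mul_of_stronglyMeasurable_left hc hcf_int hf,
    condExp_mul_of_stronglyMeasurable_left hcg hcgh_int hh] with ω hω h_sub h_cf h_cgh
  rw [h_sub, Pi.sub_apply, h_cf, h_cgh] at hω
  simp only [Pi.mul_apply] at hω
  refine le_of_mul_le_mul_left ?_ (hc_pos ω)
  linarith

variable {E : Type*} [NormedAddCommGroup E] [InnerProductSpace ℝ E] [CompleteSpace E]

theorem condExp_norm_sub_condExp_sq_ae_eq (hm : m ≤ mΩ) [IsFiniteMeasure P] {W : Ω → E}
    (hW : MemLp W 2 P) :
    P[fun ω => ‖W ω - (P[W | m]) ω‖ ^ 2 | m] =ᵐ[P]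
      fun ω => (P[fun ω' => ‖W ω'‖ ^ 2 | m]) ω - ‖(P[W | m]) ω‖ ^ 2 := by
  set V : Ω → E := P[W | m]
  have hV : MemLp V 2 P := hW.condExp one_le_two
  have hV_meas : StronglyMeasurable[m] V := stronglyMeasurable_condExp
  have hW_sq : Integrable (fun ω => ‖W ω‖ ^ 2) P := hW.norm.integrable_sq
  have hV_sq : Integrable (fun ω => ‖V ω‖ ^ 2) P := hV.norm.integrable_sq
  have hVW : Integrable (fun ω => inner ℝ (V ω) (W ω)) P :=
    (hV.norm.integrable_mul hW.norm).mono' (hV.1.inner hW.1)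
      (ae_of_all _ fun ω => norm_inner_le_norm (V ω) (W ω))
  have h_expand : (fun ω => ‖W ω - V ω‖ ^ 2) =
      (fun ω => ‖W ω‖ ^ 2) - (2 : ℝ) • (fun ω => inner ℝ (V ω) (W ω)) + fun ω => ‖V ω‖ ^ 2 := by
    ext ω
    rw [norm_sub_sq_real, real_inner_comm]
    rfl
  have h_cross : P[fun ω => inner ℝ (V ω) (W ω) | m] =ᵐ[P] fun ω => inner ℝ (V ω) (V ω) :=
    condExp_bilin_of_stronglyMeasurable_left (innerSL ℝ) hV_meas hVW
      (hW.integrable one_le_two)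
  have h_const : P[fun ω => ‖V ω‖ ^ 2 | m] = fun ω => ‖V ω‖ ^ 2 :=
    condExp_of_stronglyMeasurable hm (hV_meas.norm.pow 2) hV_sq
  rw [h_expand]
  filter_upwards [condExp_add (hW_sq.sub (hVW.smul (2 : ℝ))) hV_sq m,
    condExp_sub hW_sq (hVW.smul (2 : ℝ)) m,
    condExp_smul (μ := P) (2 : ℝ) (fun ω => inner ℝ (V ω) (W ω)) m, h_cross]
    with ω h_add h_sub h_smul h_cross
  rw [h_add, Pi.add_apply, h_sub, Pi.sub_apply, h_smul, Pi.smul_apply, h_cross,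
    h_const, real_inner_self_eq_norm_sq, smul_eq_mul]
  ring

theorem condExp_norm_smul_sub_condExp_sq_ae_le (hm : m ≤ mΩ) [IsFiniteMeasure P] {l : Ω → ℝ}
    {T : Ω → E} (hl : StronglyMeasurable[m] l) (hlT : MemLp (l • T) 2 P) :
    P[fun ω => ‖l ω • (T ω - (P[T | m]) ω)‖ ^ 2 | m] ≤ᵐ[P]
      P[fun ω => ‖l ω • T ω‖ ^ 2 | m] := by
  by_cases hT : Integrable T P
  · have h_pull : P[l • T | m] =ᵐ[P] l • P[T | m] :=
      condExp_smul_of_aestronglyMeasurable_left hl.aestronglyMeasurable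
        (hlT.integrable one_le_two) hT
    have h_congr : (fun ω => ‖l ω • (T ω - (P[T | m]) ω)‖ ^ 2) =ᵐ[P]
        fun ω => ‖(l • T) ω - (P[l • T | m]) ω‖ ^ 2 := by
      filter_upwards [h_pull] with ω hω
      rw [hω, Pi.smul_apply', Pi.smul_apply', smul_sub]
    filter_upwards [condExp_congr_ae (m := m) h_congr, condExp_norm_sub_condExp_sq_ae_eq hm hlT]
      with ω h_congr h_var
    rw [h_congr, h_var]
    exact sub_le_self _ (sq_nonneg _)
  · -- For non-integrable `T` the conditional expectation takes the junk value `0`.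
    simp only [condExp_of_not_integrable hT, Pi.zero_apply, sub_zero, Filter.EventuallyLE.refl]

end CondExp

section Increment

variable {Ω E : Type*} {m mΩ : MeasurableSpace Ω} {P : Measure Ω} [IsFiniteMeasure P]
  [NormedAddCommGroup E]

theorem memLp_truncB_smul_self [NormedSpace ℝ E] {Y : Ω → E} (hY : AEStronglyMeasurable Y P)
    (q : ENNReal) : MemLp (fun ω => truncB (Y ω) • Y ω) q P :=
  MemLp.of_bound ((continuous_truncB.comp_aestronglyMeasurable hY).smul hY) 1
    (ae_of_all _ fun ω => (norm_truncB_smul_self (Y ω)).trans_le (min_le_left _ _))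

theorem condExp_norm_truncB_smul_sq_ae_le [NormedSpace ℝ E] (hm : m ≤ mΩ) {p : ℝ} (hp1 : 1 ≤ p)
    (hp2 : p ≤ 2) {X M Z : Ω → E} {l : Ω → ℝ} (hX : AEStronglyMeasurable X P)
    (hM : StronglyMeasurable[m] M) (hZ : StronglyMeasurable[m] Z) (hl : StronglyMeasurable[m] l)
    (hl_nonneg : ∀ ω, 0 ≤ l ω) (hmom : Integrable (fun ω => ‖X ω - M ω‖ ^ p) P) :
    ∀ᵐ ω ∂P, (P[fun ω' => ‖truncB (l ω' • (X ω' - Z ω')) • l ω' • (X ω' - Z ω')‖ ^ 2 | m]) ω ≤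
      2 ^ (p - 1) * l ω ^ p * ((P[fun ω' => ‖X ω' - M ω'‖ ^ p | m]) ω + ‖M ω - Z ω‖ ^ p) := by
  set weight : Ω → ℝ := fun ω => 2 ^ (p - 1) * l ω ^ p
  have h_weight : StronglyMeasurable[m] weight :=
    ((hl.measurable.pow_const p).const_mul _).stronglyMeasurable
  have h_bias : StronglyMeasurable[m] (fun ω => ‖M ω - Z ω‖ ^ p) :=
    ((hM.sub hZ).norm.measurable.pow_const p).stronglyMeasurable
  have h_int : Integrable (fun ω => ‖truncB (l ω • (X ω - Z ω)) • l ω • (X ω - Z ω)‖ ^ 2) P :=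
    (memLp_truncB_smul_self ((hl.mono hm).aestronglyMeasurable.smul
      (hX.sub (hZ.mono hm).aestronglyMeasurable)) 2).norm.integrable_sq
  have h_le (ω : Ω) : ‖truncB (l ω • (X ω - Z ω)) • l ω • (X ω - Z ω)‖ ^ 2 ≤
      weight ω * ‖X ω - M ω‖ ^ p + weight ω * ‖M ω - Z ω‖ ^ p :=
    calc ‖truncB (l ω • (X ω - Z ω)) • l ω • (X ω - Z ω)‖ ^ 2
      _ ≤ ‖l ω • (X ω - Z ω)‖ ^ p :=
        norm_truncB_smul_self_sq_le_rpow _ (zero_le_one.trans hp1) hp2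
      _ = l ω ^ p * ‖X ω - Z ω‖ ^ p := by
        rw [norm_smul, Real.norm_of_nonneg (hl_nonneg ω),
          Real.mul_rpow (hl_nonneg ω) (norm_nonneg _)]
      _ ≤ l ω ^ p * (2 ^ (p - 1) * (‖X ω - M ω‖ ^ p + ‖M ω - Z ω‖ ^ p)) :=
        mul_le_mul_of_nonneg_left (norm_sub_rpow_le_two_rpow_mul _ _ _ hp1)
          (Real.rpow_nonneg (hl_nonneg ω) p)
      _ = weight ω * ‖X ω - M ω‖ ^ p + weight ω * ‖M ω - Z ω‖ ^ p := by ring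
  filter_upwards [condExp_ae_le_mul_condExp_add hm h_int hmom h_weight (h_weight.mul h_bias)
    (ae_of_all _ h_le)] with ω hω
  exact hω.trans_eq (mul_add _ _ _).symm

theorem condExp_norm_smul_truncB_sub_condExp_sq_ae_le [InnerProductSpace ℝ E] [CompleteSpace E]
    (hm : m ≤ mΩ) {p : ℝ} (hp1 : 1 ≤ p) (hp2 : p ≤ 2) {X M Z : Ω → E} {l : Ω → ℝ}
    (hX : AEStronglyMeasurable X P) (hM : StronglyMeasurable[m] M) (hZ : StronglyMeasurable[m] Z)
    (hl : StronglyMeasurable[m] l) (hl_nonneg : ∀ ω, 0 ≤ l ω)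
    (hmom : Integrable (fun ω => ‖X ω - M ω‖ ^ p) P) :
    ∀ᵐ ω ∂P, (P[fun ω' => ‖l ω' • (truncB (l ω' • (X ω' - Z ω')) • (X ω' - Z ω') -
        (P[fun ω'' => truncB (l ω'' • (X ω'' - Z ω'')) • (X ω'' - Z ω'') | m]) ω')‖ ^ 2 | m]) ω ≤
      2 ^ (p - 1) * l ω ^ p * ((P[fun ω' => ‖X ω' - M ω'‖ ^ p | m]) ω + ‖M ω - Z ω‖ ^ p) := by
  set T : Ω → E := fun ω => truncB (l ω • (X ω - Z ω)) • (X ω - Z ω)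
  have hT (ω : Ω) : l ω • T ω = truncB (l ω • (X ω - Z ω)) • l ω • (X ω - Z ω) := smul_comm _ _ _
  have hlT : MemLp (fun ω => l ω • T ω) 2 P := by
    simp only [hT]
    exact memLp_truncB_smul_self ((hl.mono hm).aestronglyMeasurable.smul
      (hX.sub (hZ.mono hm).aestronglyMeasurable)) 2
  have h_var := condExp_norm_smul_sub_condExp_sq_ae_le hm hl hlT
  simp only [hT] at h_var
  filter_upwards [h_var,
    condExp_norm_truncB_smul_sq_ae_le hm hp1 hp2 hX hM hZ hl hl_nonneg hmom] with ω h_var h_le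
  exact h_var.trans h_le

theorem stmt6_general [InnerProductSpace ℝ E] [CompleteSpace E]
    (ℱ : Filtration ℕ mΩ) {p : ℝ} (hp1 : 1 ≤ p) (hp2 : p ≤ 2)
    (X M Z : ℕ → Ω → E) (v lam : ℕ → Ω → ℝ)
    (hX : ∀ n, AEStronglyMeasurable (X (n + 1)) P)
    (hM : ∀ n, StronglyMeasurable[ℱ n] (M (n + 1)))
    (hZ : ∀ n, StronglyMeasurable[ℱ n] (Z (n + 1)))
    (hlam : ∀ n, StronglyMeasurable[ℱ n] (lam (n + 1))) (hlam_nonneg : ∀ n ω, 0 ≤ lam n ω)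
    (hmom : ∀ n, Integrable (fun ω => ‖X (n + 1) ω - M (n + 1) ω‖ ^ p) P)
    (hcondmom : ∀ n, P[fun ω => ‖X (n + 1) ω - M (n + 1) ω‖ ^ p | ℱ n] ≤ᵐ[P] v (n + 1))
    (S : ℕ → Ω → E)
    (hS : ∀ n ω, S n ω = ∑ m ∈ Finset.range n,
      lam (m + 1) ω •
        (truncB (lam (m + 1) ω • (X (m + 1) ω - Z (m + 1) ω)) • (X (m + 1) ω - Z (m + 1) ω)
          + Z (m + 1) ω
          - ((P[fun ω' => truncB (lam (m + 1) ω' • (X (m + 1) ω' - Z (m + 1) ω')) •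
                (X (m + 1) ω' - Z (m + 1) ω') | ℱ m]) ω + Z (m + 1) ω)))
    (n : ℕ) :
    ∀ᵐ ω ∂P, (P[fun ω' => ‖S (n + 1) ω' - S n ω'‖ ^ 2 | ℱ n]) ω ≤
      2 ^ (p - 1) * lam (n + 1) ω ^ p * (v (n + 1) ω + ‖M (n + 1) ω - Z (n + 1) ω‖ ^ p) := by
  simp only [hS, Finset.sum_range_succ, add_sub_cancel_left, add_sub_add_right_eq_sub]
  filter_upwards [hcondmom n, condExp_norm_smul_truncB_sub_condExp_sq_ae_le (ℱ.le n) hp1 hp2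
    (hX n) (hM n) (hZ n) (hlam n) (hlam_nonneg (n + 1)) (hmom n)] with ω hv h_le
  have h_weight : 0 ≤ 2 ^ (p - 1) * lam (n + 1) ω ^ p :=
    mul_nonneg (by positivity) (Real.rpow_nonneg (hlam_nonneg _ _) _)
  exact h_le.trans (mul_le_mul_of_nonneg_left (by gcongr) h_weight)

end Increment

/-- **Conditional second-moment bound for the increments of `S` in a Hilbert space.**
If `𝔹` is a real separable Hilbert space, then for every `n ≥ 1`, almost surely
`E[‖Sₙ - S_{n-1}‖² | F_{n-1}] ≤ 2^{p-1} λₙ^p (v + ‖μ - Ẑₙ‖^p)`. -/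
theorem stmt6
    {B : Type*} [NormedAddCommGroup B] [InnerProductSpace ℝ B] [CompleteSpace B]
    [TopologicalSpace.SeparableSpace B]
    {Ω : Type*} {mΩ : MeasurableSpace Ω} {P : Measure Ω} [IsProbabilityMeasure P]
    (ℱ : Filtration ℕ mΩ) (X : ℕ → Ω → B) (μ : B) (p v : ℝ)
    (hp1 : 1 < p) (hp2 : p ≤ 2) (hv : 0 < v)
    (hadapted : ∀ n : ℕ, 1 ≤ n → StronglyMeasurable[ℱ n] (X n))
    (hint : ∀ n : ℕ, 1 ≤ n → Integrable (X n) P)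
    (hmom : ∀ n : ℕ, 1 ≤ n → Integrable (fun ω => ‖X n ω‖ ^ p) P)
    (hcondmean : ∀ n : ℕ, P[X (n + 1) | ℱ n] =ᵐ[P] fun _ => μ)
    (hcondmom : ∀ n : ℕ, ∀ᵐ ω ∂P, (P[fun ω' => ‖X (n + 1) ω' - μ‖ ^ p | ℱ n]) ω ≤ v)
    (Z : ℕ → Ω → B) (hZpred : ∀ n : ℕ, StronglyMeasurable[ℱ n] (Z (n + 1)))
    (lam : ℕ → Ω → ℝ) (hlampred : ∀ n : ℕ, StronglyMeasurable[ℱ n] (lam (n + 1)))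
    (hlampos : ∀ n ω, 0 < lam n ω)
    (S : ℕ → Ω → B)
    (hS : ∀ n ω, S n ω = ∑ m ∈ Finset.range n,
      lam (m + 1) ω •
        (truncB (lam (m + 1) ω • (X (m + 1) ω - Z (m + 1) ω)) • (X (m + 1) ω - Z (m + 1) ω)
          + Z (m + 1) ω
          - ((P[fun ω' => truncB (lam (m + 1) ω' • (X (m + 1) ω' - Z (m + 1) ω')) •
                (X (m + 1) ω' - Z (m + 1) ω') | ℱ m]) ω + Z (m + 1) ω)))
    (n : ℕ) :
    ∀ᵐ ω ∂P, (P[fun ω' => ‖S (n + 1) ω' - S n ω'‖ ^ 2 | ℱ n]) ω ≤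
      2 ^ (p - 1) * lam (n + 1) ω ^ p * (v + ‖μ - Z (n + 1) ω‖ ^ p) := by
  have hX (k : ℕ) : AEStronglyMeasurable (X (k + 1)) P := (hint _ k.succ_pos).aestronglyMeasurable
  exact stmt6_general ℱ hp1.le hp2 X (fun _ _ => μ) Z (fun _ _ => v) lam hX
    (fun _ => stronglyMeasurable_const) hZpred hlampred (fun k ω => (hlampos k ω).le)
    (fun k => integrable_norm_sub_rpow (one_pos.trans hp1) (hX k) aestronglyMeasurable_const
      (hmom _ k.succ_pos) (integrable_const _)) hcondmom S hS n
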